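/- Let X be a compact Hausdorff topological space, let f ⊆ X × X be a closed relation on X, let A ⊆ X be an attractor for f, and let N ⊆ X be a neighborhood of A. Then there exists a closed attractor block B for f such that B ⊆ N and ω(B; f) = A. -/

import Mathlib

/-!
Let `U` be a neighborhood of the attractor `A` with `ω(U; f) = A`. Every open set
`V ⊇ A` contains a closed confining set `K` with `fⁿ(U) ⊆ K` for some `n`
(compactness: the sets defining `ω(U; f)` form a directed family), and a closed relation on a
compact Hausdorff space is upper semicontinuous, i.e. `{x | f(x) ⊆ O}` is open for open `O`.

Take `V = int U ∩ int N`. Upper semicontinuity and `f(K) ⊆ K` give a closed neighborhood `C` of `K`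
whose first `n` iterates all stay in `V` (`exists_isOpen_iterate_subset`), and moreover
`fⁿ⁺¹(C) ⊆ K ⊆ int C`. Fattening the successive images `C, f(C), …, fⁿ(C)` from the last one
backwards, so that each fattened set is mapped into the interior of the next and the last one is
mapped into `int C`, the union `B` is a closed subset of `V` with `f(B) ⊆ int B ∪ int C` and
`C ⊆ int B` (`exists_isClosed_relImage_subset`), hence an attractor block.
Finally `ω(B; f) = A` because `A ⊆ B ⊆ U` and `fⁿ(A) = A`.
-/

/-- The image of a set `S` under a relation `f ⊆ X × X`. -/
def relImage {X : Type*} (f : Set (X × X)) (S : Set X) : Set X :=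
  {y | ∃ x ∈ S, (x, y) ∈ f}

/-- Composition of relations: `relComp g f = {(x,z) | ∃ y, (x,y) ∈ f ∧ (y,z) ∈ g}`. -/
def relComp {X : Type*} (g f : Set (X × X)) : Set (X × X) :=
  {p | ∃ y, (p.1, y) ∈ f ∧ (y, p.2) ∈ g}

/-- Iterates of a relation: `f⁰ = id`, `fⁿ⁺¹ = f ∘ fⁿ`. -/
def relIter {X : Type*} (f : Set (X × X)) : ℕ → Set (X × X)
  | 0 => {p | p.1 = p.2}
  | n + 1 => relComp f (relIter f n)

/-- A set `K` is confining for `f` if `f(K) ⊆ K`. -/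
def Confining {X : Type*} (f : Set (X × X)) (K : Set X) : Prop :=
  relImage f K ⊆ K

/-- The omega limit set `ω(S; f)`: the intersection of all closed confining sets `K`
with `fⁿ(S) ⊆ K` for some `n ≥ 0`. -/
def relOmegaLimit {X : Type*} [TopologicalSpace X] (f : Set (X × X)) (S : Set X) : Set X :=
  ⋂₀ {K | IsClosed K ∧ Confining f K ∧ ∃ n : ℕ, relImage (relIter f n) S ⊆ K}

/-- `B` is an attractor block for `f` if `f(closure B) ⊆ interior B`. -/
def IsAttractorBlock {X : Type*} [TopologicalSpace X] (f : Set (X × X)) (B : Set X) : Prop :=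
  relImage f (closure B) ⊆ interior B

/-- `A` is an attractor for `f` if `f(A) = A` and there is a neighborhood `U` of `A`
with `ω(U; f) = A`. -/
def IsAttractor {X : Type*} [TopologicalSpace X] (f : Set (X × X)) (A : Set X) : Prop :=
  relImage f A = A ∧ ∃ U ∈ nhdsSet A, relOmegaLimit f U = A

theorem relImage_mono {X : Type*} (f : Set (X × X)) : Monotone (relImage f) :=
  fun _ _ h _ ⟨x, hx, hxy⟩ => ⟨x, h hx, hxy⟩

theorem relImage_relIter {X : Type*} (f : Set (X × X)) (n : ℕ) (S : Set X) :
    relImage (relIter f n) S = (relImage f)^[n] S := by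
  induction n with
  | zero => ext y; simp [relImage, relIter]
  | succ n ih =>
    rw [Function.iterate_succ_apply', ← ih]
    ext y
    constructor
    · rintro ⟨x, hx, z, hxz, hzy⟩
      exact ⟨z, ⟨x, hx, hxz⟩, hzy⟩
    · rintro ⟨z, ⟨x, hx, hxz⟩, hzy⟩
      exact ⟨x, hx, z, hxz, hzy⟩

theorem Confining.iterate_subset {X : Type*} {f : Set (X × X)} {K S : Set X}
    (hK : Confining f K) {n m : ℕ} (hnm : n ≤ m) (h : (relImage f)^[n] S ⊆ K) :
    (relImage f)^[m] S ⊆ K := by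
  induction m, hnm using Nat.le_induction with
  | base => exact h
  | succ m _ ih =>
    rw [Function.iterate_succ_apply']
    exact (relImage_mono f ih).trans hK

theorem isClosed_relImage {X : Type*} [TopologicalSpace X] [CompactSpace X] [T2Space X]
    {f : Set (X × X)} (hf : IsClosed f) {C : Set X} (hC : IsClosed C) :
    IsClosed (relImage f C) := by
  have h : relImage f C = Prod.snd '' (f ∩ Prod.fst ⁻¹' C) := by
    ext y; simp [relImage, and_comm]
  rw [h]
  exact ((hf.inter (hC.preimage continuous_fst)).isCompact.image continuous_snd).isClosed

/-- A closed relation on a compact Hausdorff space is upper semicontinuous. -/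
theorem isOpen_setOf_relImage_subset {X : Type*} [TopologicalSpace X] [CompactSpace X] [T2Space X]
    {f : Set (X × X)} (hf : IsClosed f) {O : Set X} (hO : IsOpen O) :
    IsOpen {x | relImage f {x} ⊆ O} := by
  have h : {x | relImage f {x} ⊆ O} = (Prod.fst '' (f ∩ Prod.snd ⁻¹' Oᶜ))ᶜ := by
    ext x
    simp [relImage, Set.subset_def]
  rw [h, isOpen_compl_iff]
  exact ((hf.inter (hO.isClosed_compl.preimage continuous_snd)).isCompact.image
    continuous_fst).isClosed

theorem relImage_subset_iff {X : Type*} {f : Set (X × X)} {S O : Set X} :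
    relImage f S ⊆ O ↔ S ⊆ {x | relImage f {x} ⊆ O} := by
  constructor
  · exact fun h x hx => (relImage_mono f (Set.singleton_subset_iff.2 hx)).trans h
  · rintro h y ⟨x, hx, hxy⟩
    exact h hx ⟨x, rfl, hxy⟩

theorem exists_isOpen_iterate_subset {X : Type*} [TopologicalSpace X] [CompactSpace X] [T2Space X]
    {f : Set (X × X)} (hf : IsClosed f) {K V : Set X} (hK : Confining f K) (hV : IsOpen V)
    (hKV : K ⊆ V) (k : ℕ) :
    ∃ W, IsOpen W ∧ K ⊆ W ∧ ∀ i ≤ k, (relImage f)^[i] W ⊆ V := by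
  induction k with
  | zero =>
    refine ⟨V, hV, hKV, fun i hi => ?_⟩
    obtain rfl : i = 0 := by omega
    exact subset_rfl
  | succ k ih =>
    obtain ⟨W, hW, hKW, h⟩ := ih
    refine ⟨V ∩ {x | relImage f {x} ⊆ W}, hV.inter (isOpen_setOf_relImage_subset hf hW),
      Set.subset_inter hKV (relImage_subset_iff.1 (Set.Subset.trans hK hKW)), fun i hi => ?_⟩
    cases i with
    | zero => exact Set.inter_subset_left
    | succ i =>
      rw [Function.iterate_succ_apply]
      exact ((relImage_mono f).iterate i (relImage_subset_iff.2 Set.inter_subset_right)).trans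
        (h i (by omega))

/-- Fattening of `C ∪ f(C) ∪ ⋯ ∪ fᵏ(C)`: if these sets lie in `V` and `fᵏ⁺¹(C)` lies in the open
set `O`, some closed `B ⊆ V` contains `C` in its interior and is mapped into `int B ∪ O`. -/
theorem exists_isClosed_relImage_subset {X : Type*} [TopologicalSpace X] [CompactSpace X]
    [T2Space X] {f : Set (X × X)} (hf : IsClosed f) {V O : Set X} (hV : IsOpen V) (hO : IsOpen O)
    (k : ℕ) {C : Set X} (hC : IsClosed C) (hCV : ∀ i ≤ k, (relImage f)^[i] C ⊆ V)
    (hCO : (relImage f)^[k + 1] C ⊆ O) :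
    ∃ B, IsClosed B ∧ B ⊆ V ∧ C ⊆ interior B ∧ relImage f B ⊆ interior B ∪ O := by
  induction k generalizing C with
  | zero =>
    obtain ⟨W, hW, hCW, hWV⟩ := normal_exists_closure_subset hC
      (hV.inter (isOpen_setOf_relImage_subset hf hO))
      (Set.subset_inter (hCV 0 le_rfl) (relImage_subset_iff.1 hCO))
    exact ⟨closure W, isClosed_closure, hWV.trans Set.inter_subset_left,
      hCW.trans (interior_maximal subset_closure hW),
      (relImage_subset_iff.2 (hWV.trans Set.inter_subset_right)).trans Set.subset_union_right⟩
  | succ k ih =>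
    obtain ⟨B, hB, hBV, hCB, hfB⟩ := ih (isClosed_relImage hf hC)
      (fun i hi => hCV (i + 1) (by omega)) hCO
    obtain ⟨W, hW, hCW, hWV⟩ := normal_exists_closure_subset hC
      (hV.inter (isOpen_setOf_relImage_subset hf isOpen_interior))
      (Set.subset_inter (hCV 0 (Nat.zero_le _)) (relImage_subset_iff.1 hCB))
    have hint : interior B ⊆ interior (closure W ∪ B) := interior_mono Set.subset_union_right
    refine ⟨closure W ∪ B, isClosed_closure.union hB,
      Set.union_subset (hWV.trans Set.inter_subset_left) hBV,
      hCW.trans (interior_maximal (subset_closure.trans Set.subset_union_left) hW), ?_⟩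
    rintro y ⟨x, hx | hx, hxy⟩
    · exact Or.inl (hint ((hWV hx).2 ⟨x, rfl, hxy⟩))
    · exact (hfB ⟨x, hx, hxy⟩).imp_left fun h => hint h

/-- Every open set containing `ω(S; f)` contains one of the sets defining `ω(S; f)`. -/
theorem exists_confining_subset {X : Type*} [TopologicalSpace X] [CompactSpace X]
    {f : Set (X × X)} {S V : Set X} (hV : IsOpen V) (h : relOmegaLimit f S ⊆ V) :
    ∃ K, IsClosed K ∧ Confining f K ∧ (∃ n, (relImage f)^[n] S ⊆ K) ∧ K ⊆ V := by
  let F : Set (Set X) :=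
    {K | IsClosed K ∧ Confining f K ∧ ∃ n : ℕ, relImage (relIter f n) S ⊆ K}
  have : Nonempty F :=
    ⟨⟨Set.univ, isClosed_univ, Set.subset_univ _, 0, Set.subset_univ _⟩⟩
  have hdir : Directed (· ⊇ ·) (fun K : F => (K : Set X)) := by
    rintro ⟨K, hK, hcK, n, hn⟩ ⟨L, hL, hcL, m, hm⟩
    rw [relImage_relIter] at hn hm
    refine ⟨⟨K ∩ L, hK.inter hL, ?_, max n m, ?_⟩, Set.inter_subset_left, Set.inter_subset_right⟩
    · exact Set.subset_inter ((relImage_mono f Set.inter_subset_left).trans hcK)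
        ((relImage_mono f Set.inter_subset_right).trans hcL)
    · rw [relImage_relIter]
      exact Set.subset_inter (hcK.iterate_subset (le_max_left _ _) hn)
        (hcL.iterate_subset (le_max_right _ _) hm)
  obtain ⟨⟨K, hK, hcK, n, hn⟩, hKV⟩ := exists_subset_nhds_of_isCompact' hdir
    (fun K => K.2.1.isCompact) (fun K => K.2.1) (U := V)
    (fun x hx => hV.mem_nhds (h (by rwa [← Set.sInter_eq_iInter] at hx)))
  exact ⟨K, hK, hcK, ⟨n, by rwa [relImage_relIter] at hn⟩, hKV⟩

theorem relOmegaLimit_mono {X : Type*} [TopologicalSpace X] {f : Set (X × X)} {S T : Set X}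
    (h : S ⊆ T) : relOmegaLimit f S ⊆ relOmegaLimit f T :=
  Set.sInter_subset_sInter fun _ ⟨hK, hc, n, hn⟩ => ⟨hK, hc, n, (relImage_mono _ h).trans hn⟩

/-- If `f` is a closed relation on a compact Hausdorff space, `A` is an attractor for `f`,
and `N` is a neighborhood of `A`, then there is a closed attractor block `B ⊆ N`
with `ω(B; f) = A`. -/
theorem exists_attractorBlock_subset {X : Type*} [TopologicalSpace X]
    [CompactSpace X] [T2Space X] (f : Set (X × X)) (hf : IsClosed f)
    (A : Set X) (hA : IsAttractor f A) (N : Set X) (hN : N ∈ nhdsSet A) :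
    ∃ B : Set X, IsClosed B ∧ IsAttractorBlock f B ∧ B ⊆ N ∧ relOmegaLimit f B = A := by
  obtain ⟨hfA, U, hU, hUA⟩ := hA
  obtain ⟨K, hK, hcK, ⟨n, hn⟩, hKV⟩ := exists_confining_subset (f := f) (S := U)
    (isOpen_interior.inter isOpen_interior : IsOpen (interior U ∩ interior N))
    (hUA.trans_subset
      (Set.subset_inter (subset_interior_iff_mem_nhdsSet.2 hU)
        (subset_interior_iff_mem_nhdsSet.2 hN)))
  have hAK : A ⊆ K := by
    rw [← hUA]
    exact Set.sInter_subset_of_mem ⟨hK, hcK, n, by rwa [relImage_relIter]⟩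
  obtain ⟨W, hW, hKW, hWV⟩ := exists_isOpen_iterate_subset hf hcK
    (isOpen_interior.inter isOpen_interior) hKV n
  obtain ⟨D, hD, hKD, hDW⟩ := normal_exists_closure_subset hK hW hKW
  have hDC : D ⊆ interior (closure D) := interior_maximal subset_closure hD
  have hCU : closure D ⊆ U :=
    hDW.trans ((hWV 0 (Nat.zero_le _)).trans (Set.inter_subset_left.trans interior_subset))
  obtain ⟨B, hB, hBV, hCB, hfB⟩ := exists_isClosed_relImage_subset hf
    (isOpen_interior.inter isOpen_interior) (isOpen_interior (s := closure D)) n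
    (isClosed_closure (s := D))
    (fun i hi => ((relImage_mono f).iterate i hDW).trans (hWV i hi))
    (((relImage_mono f).iterate (n + 1) hCU).trans
      ((hcK.iterate_subset n.le_succ hn).trans (hKD.trans hDC)))
  refine ⟨B, hB, ?_, hBV.trans (Set.inter_subset_right.trans interior_subset), ?_⟩
  · rw [IsAttractorBlock, hB.closure_eq]
    exact hfB.trans (Set.union_subset subset_rfl (interior_subset.trans hCB))
  · apply Set.Subset.antisymm
    · exact (relOmegaLimit_mono (hBV.trans (Set.inter_subset_left.trans interior_subset))).trans_eq
        hUA
    · have hAB : A ⊆ B :=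
        hAK.trans (hKD.trans (subset_closure.trans (hCB.trans interior_subset)))
      refine Set.subset_sInter fun L ⟨_, _, m, hm⟩ => ?_
      rw [relImage_relIter] at hm
      have h := ((relImage_mono f).iterate m hAB).trans hm
      rwa [Function.iterate_fixed hfA] at h
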